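/- Let {G_n} be a sequence of finite graphs, each with non-empty edge set, and let μ be an s-graphon. Then the following are equivalent: (1) for every k ∈ ℕ, the k-shapes C(μ_{Ã_{G_n}}, k) converge to C(μ,k) in the Vietoris topology on compact subsets of ℝ^{k×k} (i.e. {G_n} is s-convergent to μ); (2) the shapes C(G_n) := C(μ_{Ã_{G_n}}) converge to C(μ) in the Vietoris topology on the hyperspace of compact subsets of the space of s-graphons. -/

import Mathlib

open MeasureTheory Topology Filter

noncomputable section

/-- The unit square `[0,1]²`. -/
abbrev Sq : Type := unitInterval × unitInterval

/-- Convergence of a sequence of subsets in the Vietoris topology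
(upper + lower Vietoris convergence). -/
def VietorisTendsto {X : Type*} [TopologicalSpace X] (A : ℕ → Set X) (B : Set X) : Prop :=
  (∀ U : Set X, IsOpen U → B ⊆ U → ∀ᶠ n in atTop, A n ⊆ U) ∧
  (∀ U : Set X, IsOpen U → (B ∩ U).Nonempty → ∀ᶠ n in atTop, (A n ∩ U).Nonempty)

/-- A measure on the unit square is symmetric if it is invariant under the coordinate swap. -/
def IsSymmSq (μ : Measure Sq) : Prop := μ.map Prod.swap = μ

/-- s-graphons: symmetric Borel probability measures on the unit square,
with the weak topology. -/
def SGraphon : Type := {μ : ProbabilityMeasure Sq // IsSymmSq (μ : Measure Sq)}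

instance : TopologicalSpace SGraphon :=
  inferInstanceAs (TopologicalSpace {μ : ProbabilityMeasure Sq // IsSymmSq (μ : Measure Sq)})

/-- The underlying measure of an s-graphon. -/
def SGraphon.toMeasure (μ : SGraphon) : Measure Sq := (μ.1 : Measure Sq)

/-- A non-negative bounded Borel function on the unit square is fairly distributed
if all its horizontal and vertical sections integrate (w.r.t. Lebesgue measure) to 1. -/
structure FairlyDistributed (f : Sq → ℝ) : Prop where
  measurable : Measurable f
  nonneg : ∀ p, 0 ≤ f p
  bounded : ∃ C : ℝ, ∀ p, f p ≤ C
  row : ∀ x : unitInterval, ∫ v, f (x, v) = 1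
  col : ∀ y : unitInterval, ∫ u, f (u, y) = 1

/-- The density `φ(f,μ)`. -/
def phiFn (f : Sq → ℝ) (μ : Measure Sq) (p : Sq) : ℝ :=
  ∫ q, f (q.1, p.1) * f (q.2, p.2) ∂μ

/-- The measure `Φ(f,μ)`, with density `φ(f,μ)` w.r.t. 2-dimensional Lebesgue measure. -/
def PhiMeas (f : Sq → ℝ) (μ : Measure Sq) : Measure Sq :=
  volume.withDensity fun p => ENNReal.ofReal (phiFn f μ p)

/-- The shape of a measure `μ` on the unit square: the weak closure of the set of
(s-graphons corresponding to) the measures `Φ(f,μ)`, `f` continuous fairly distributed. -/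
def shapeM (μ : Measure Sq) : Set SGraphon :=
  closure {ν : SGraphon | ∃ f : Sq → ℝ, FairlyDistributed f ∧ Continuous f ∧
    ν.toMeasure = PhiMeas f μ}

/-- The shape `C(μ)` of an s-graphon. -/
def shape (μ : SGraphon) : Set SGraphon := shapeM μ.toMeasure

/-- A fractional partition into `k` parts: non-negative Borel functions on `[0,1]`
summing to the constant function 1, each integrating to `1/k`. -/
def IsFracPartition (k : ℕ) (f : Fin k → unitInterval → ℝ) : Prop :=
  (∀ i, Measurable (f i)) ∧ (∀ i x, 0 ≤ f i x) ∧ (∀ x, ∑ i, f i x = 1) ∧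
    ∀ i, ∫ x, f i x = 1 / k

/-- The `k`-shape `C(μ,k)`: the closure in `ℝ^{k×k}` of the set of density matrices of
fractional partitions into `k` parts. -/
def kShape (μ : Measure Sq) (k : ℕ) : Set (Matrix (Fin k) (Fin k) ℝ) :=
  closure {M | ∃ f : Fin k → unitInterval → ℝ, IsFracPartition k f ∧
    ∀ i j, M i j = ∫ p, f i p.1 * f j p.2 ∂μ}

/-- `M_k^*`: symmetric `k×k` matrices with non-negative entries summing to 1. -/
def Mstar (k : ℕ) : Set (Matrix (Fin k) (Fin k) ℝ) :=
  {M | M.IsSymm ∧ (∀ i j, 0 ≤ M i j) ∧ ∑ i, ∑ j, M i j = 1}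

/-- The index `i` (0-based) with `u ∈ [i/k, (i+1)/k)` (and `i = k-1` for `u = 1`). -/
def gridIdx (k : ℕ) (hk : 0 < k) (u : unitInterval) : Fin k :=
  ⟨min ⌊(u : ℝ) * k⌋₊ (k - 1), lt_of_le_of_lt (min_le_right _ _) (Nat.sub_lt hk one_pos)⟩

/-- The measure `μ_M` associated to a `k×k` matrix `M`: its density w.r.t. 2-dimensional
Lebesgue measure equals `k² M(i,j)` on the square `[i/k,(i+1)/k) × [j/k,(j+1)/k)` (0-based). -/
def muM {k : ℕ} (M : Matrix (Fin k) (Fin k) ℝ) : Measure Sq :=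
  if hk : 0 < k then
    volume.withDensity fun p =>
      ENNReal.ofReal ((k : ℝ) ^ 2 * M (gridIdx k hk p.1) (gridIdx k hk p.2))
  else 0

/-- `C̃(μ,k)`: the `k`-shape of `μ`, interpreted as a set of s-graphons. -/
def kShapeTilde (μ : Measure Sq) (k : ℕ) : Set SGraphon :=
  {ν : SGraphon | ∃ M ∈ kShape μ k, ν.toMeasure = muM M}

/-- The interval `I_i = [i/k, (i+1)/k)` (0-based), with `I_{k-1} = [(k-1)/k, 1]`,
as a subset of `[0,1]`. -/
def Ik (k : ℕ) (i : Fin k) : Set unitInterval :=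
  if (i : ℕ) + 1 = k then Subtype.val ⁻¹' Set.Icc (((i : ℕ) : ℝ) / k) 1
  else Subtype.val ⁻¹' Set.Ico (((i : ℕ) : ℝ) / k) ((((i : ℕ) : ℝ) + 1) / k)

open scoped Classical in
/-- The adjacency matrix of a finite graph, with real entries. -/
def adjMat {m : ℕ} (G : SimpleGraph (Fin m)) : Matrix (Fin m) (Fin m) ℝ :=
  fun i j => if G.Adj i j then 1 else 0

/-- The adjacency matrix normalized by its `ℓ¹`-norm (the sum of its entries). -/
def normAdj {m : ℕ} (G : SimpleGraph (Fin m)) : Matrix (Fin m) (Fin m) ℝ :=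
  (∑ i, ∑ j, adjMat G i j)⁻¹ • adjMat G

/-!
For a fractional partition `h` into `k` parts consisting of continuous functions, let `P` send an
s-graphon `ν` to the matrix `(∫ h_i ⊗ h_j dν)` and let `Q` send a matrix `M` to the s-graphon with
density `k² ∑ M_{ab} h_a ⊗ h_b`. Both maps are continuous. Averaging a fractional partition along
a fairly distributed kernel gives a fractional partition, so `P` maps `C(μ)` into `C(μ,k)`; and `Q`
applied to the density matrix of `μ` along `F` is `Φ` along the kernel `k ∑ F_a ⊗ h_a`, so `Q` maps
`C(μ,k)` into `C(μ)`. When `h` is close to the partition into `k` grid intervals, `P ∘ Q` is close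
to the identity for fixed `k`, and `Q ∘ P` is close to the identity for large `k`. As s-graphons
and normalized matrices form compact spaces, such approximate retractions carry Vietoris
convergence from either side to the other.
-/

theorem vietorisTendsto_image_iff {X Y : Type*} [TopologicalSpace X] [TopologicalSpace Y]
    {f : X → Y} (hf : IsInducing f) {A : ℕ → Set X} {B : Set X} :
    VietorisTendsto (fun n => f '' A n) (f '' B) ↔ VietorisTendsto A B := by
  simp only [VietorisTendsto, hf.isOpen_iff, Set.image_subset_iff, Set.image_inter_nonempty_iff]
  aesop

section Approximation

variable {X ι : Type*} {Y : ι → Type*} [TopologicalSpace X] [∀ i, TopologicalSpace (Y i)]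
  {A : ℕ → Set X} {B : Set X} {C : ∀ i, ℕ → Set (Y i)} {D : ∀ i, Set (Y i)}
  {p : ∀ i, X → Y i} {q : ∀ i, Y i → X}

theorem eventually_subset_of_approx [CompactSpace X] [RegularSpace X] (hB : IsClosed B)
    (hCD : ∀ i V, IsOpen V → D i ⊆ V → ∀ᶠ n in atTop, C i n ⊆ V)
    (hp : ∀ i, Continuous (p i)) (hq : ∀ i, Continuous (q i))
    (hpA : ∀ i n, Set.MapsTo (p i) (A n) (C i n)) (hqD : ∀ i, Set.MapsTo (q i) (D i) B)
    (happrox : ∀ x, ∀ U ∈ 𝓝 x, ∃ i, q i (p i x) ∈ U)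
    {U : Set X} (hU : IsOpen U) (hBU : B ⊆ U) : ∀ᶠ n in atTop, A n ⊆ U := by
  have hlocal : ∀ x ∈ Uᶜ, {z : ℕ × X | z.2 ∉ A z.1} ∈ (atTop : Filter ℕ) ×ˢ 𝓝 x := by
    intro x hxU
    obtain ⟨i, hi⟩ := happrox x Bᶜ (hB.isOpen_compl.mem_nhds fun hxB => hxU (hBU hxB))
    obtain ⟨O, W, hO, hW, hBO, hxW, hOW⟩ := (SeparatedNhds.of_isCompact_isClosed
      (isCompact_singleton (x := q i (p i x))) hB (by simpa using hi)).symm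
    have hC : ∀ᶠ n in atTop, C i n ⊆ q i ⁻¹' O :=
      hCD i _ (hO.preimage (hq i)) fun y hy => hBO (hqD i hy)
    have hx : ∀ᶠ z in 𝓝 x, q i (p i z) ∈ W :=
      ((hq i).comp (hp i)).continuousAt (hW.mem_nhds (by simpa using hxW))
    filter_upwards [hC.prod_mk hx] with z hz hzA
    exact Set.disjoint_left.mp hOW (hz.1 (hpA i z.1 hzA)) hz.2
  have hcover : {z : ℕ × X | z.2 ∉ A z.1} ∈ (atTop : Filter ℕ) ×ˢ 𝓟 Uᶜ :=
    prod_mono le_rfl principal_le_nhdsSet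
      (hU.isClosed_compl.isCompact.mem_prod_nhdsSet_of_forall hlocal)
  filter_upwards [eventually_prod_principal_iff.mp hcover] with n hn x hx
  exact by_contra fun hxU => hn x hxU hx

theorem eventually_inter_nonempty_of_approx
    (hCD : ∀ i V, IsOpen V → (D i ∩ V).Nonempty → ∀ᶠ n in atTop, (C i n ∩ V).Nonempty)
    (hq : ∀ i, Continuous (q i))
    (hpB : ∀ i, Set.MapsTo (p i) B (D i)) (hqC : ∀ i n, Set.MapsTo (q i) (C i n) (A n))
    (happrox : ∀ x, ∀ U ∈ 𝓝 x, ∃ i, q i (p i x) ∈ U)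
    {U : Set X} (hU : IsOpen U) (hBU : (B ∩ U).Nonempty) :
    ∀ᶠ n in atTop, (A n ∩ U).Nonempty := by
  obtain ⟨x, hxB, hxU⟩ := hBU
  obtain ⟨i, hi⟩ := happrox x U (hU.mem_nhds hxU)
  filter_upwards [hCD i _ (hU.preimage (hq i)) ⟨p i x, hpB i hxB, hi⟩] with n hn
  obtain ⟨y, hyC, hyU⟩ := hn
  exact ⟨q i y, hqC i n hyC, hyU⟩

theorem vietorisTendsto_of_approx [CompactSpace X] [RegularSpace X] (hB : IsClosed B)
    (hCD : ∀ i, VietorisTendsto (C i) (D i))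
    (hp : ∀ i, Continuous (p i)) (hq : ∀ i, Continuous (q i))
    (hpA : ∀ i n, Set.MapsTo (p i) (A n) (C i n)) (hpB : ∀ i, Set.MapsTo (p i) B (D i))
    (hqC : ∀ i n, Set.MapsTo (q i) (C i n) (A n)) (hqD : ∀ i, Set.MapsTo (q i) (D i) B)
    (happrox : ∀ x, ∀ U ∈ 𝓝 x, ∃ i, q i (p i x) ∈ U) : VietorisTendsto A B :=
  ⟨fun _ => eventually_subset_of_approx hB (fun i => (hCD i).1) hp hq hpA hqD happrox,
    fun _ => eventually_inter_nonempty_of_approx (fun i => (hCD i).2) hq hpB hqC happrox⟩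

end Approximation

section WithDensity

variable {α β : Type*} [MeasurableSpace α] [MeasurableSpace β] {μ : Measure α}

theorem integral_withDensity_ofReal {q : α → ℝ} (hq : Measurable q) (hq0 : ∀ x, 0 ≤ q x)
    (g : α → ℝ) :
    ∫ x, g x ∂μ.withDensity (fun x => ENNReal.ofReal (q x)) = ∫ x, q x * g x ∂μ := by
  rw [integral_withDensity_eq_integral_toReal_smul (by fun_prop) (by simp)]
  simp only [ENNReal.toReal_ofReal (hq0 _), smul_eq_mul]

theorem isProbabilityMeasure_withDensity_ofReal {q : α → ℝ} (hq : Integrable q μ)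
    (hq0 : ∀ x, 0 ≤ q x) (hq1 : ∫ x, q x ∂μ = 1) :
    IsProbabilityMeasure (μ.withDensity fun x => ENNReal.ofReal (q x)) := by
  refine ⟨?_⟩
  rw [withDensity_apply _ MeasurableSet.univ, Measure.restrict_univ,
    ← ofReal_integral_eq_lintegral_ofReal hq (Eventually.of_forall hq0), hq1, ENNReal.ofReal_one]

theorem measurePreserving_withDensity {ν : Measure β} {f : α → β} (hf : MeasurePreserving f μ ν)
    {q : β → ENNReal} (hq : Measurable q) :
    MeasurePreserving f (μ.withDensity fun x => q (f x)) (ν.withDensity q) := by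
  refine ⟨hf.measurable, Measure.ext fun s hs => ?_⟩
  rw [Measure.map_apply hf.measurable hs, withDensity_apply _ (hf.measurable hs),
    withDensity_apply _ hs, hf.setLIntegral_comp_preimage hs hq]

end WithDensity

theorem integrable_of_abs_le {α : Type*} [MeasurableSpace α] {μ : Measure α} [IsFiniteMeasure μ]
    {f : α → ℝ} (hf : Measurable f) {C : ℝ} (hC : ∀ x, |f x| ≤ C) : Integrable f μ :=
  .of_bound hf.aestronglyMeasurable C (.of_forall hC)

theorem exists_seq_continuous_tendsto_ae {α E : Type*} [TopologicalSpace α] [NormalSpace α]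
    [MeasurableSpace α] [BorelSpace α] [NormedAddCommGroup E] [NormedSpace ℝ E] {μ : Measure α}
    [μ.WeaklyRegular] {f : α → E} (hf : Integrable f μ) :
    ∃ g : ℕ → α → E, (∀ n, Continuous (g n)) ∧
      ∀ᵐ x ∂μ, Tendsto (fun n => g n x) atTop (𝓝 (f x)) := by
  obtain ⟨ε, -, hε0, hε⟩ := exists_seq_strictAnti_tendsto' (zero_lt_one (α := ENNReal))
  choose g hg hgL using fun n =>
    (memLp_one_iff_integrable.mpr hf).exists_boundedContinuous_eLpNorm_sub_le
      ENNReal.one_ne_top (hε0 n).1.ne'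
  have hlim : Tendsto (fun n => eLpNorm (⇑(g n) - f) 1 μ) atTop (𝓝 0) :=
    tendsto_of_tendsto_of_tendsto_of_le_of_le tendsto_const_nhds hε (fun _ => zero_le)
      fun n => (eLpNorm_sub_comm _ _ _ _).trans_le (hg n)
  obtain ⟨ns, -, hns⟩ := (tendstoInMeasure_of_tendsto_eLpNorm one_ne_zero
    (fun n => (hgL n).1) hf.1 hlim).exists_seq_tendsto_ae
  exact ⟨fun n => g (ns n), fun n => (g (ns n)).continuous, hns⟩

namespace SGraphon

instance (μ : SGraphon) : IsProbabilityMeasure μ.toMeasure :=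
  inferInstanceAs (IsProbabilityMeasure (μ.1 : Measure Sq))

theorem map_swap (μ : SGraphon) : μ.toMeasure.map Prod.swap = μ.toMeasure := μ.2

instance : T2Space SGraphon :=
  inferInstanceAs (T2Space {μ : ProbabilityMeasure Sq // IsSymmSq (μ : Measure Sq)})

theorem isClosed_setOf_isSymmSq :
    IsClosed {μ : ProbabilityMeasure Sq | IsSymmSq (μ : Measure Sq)} := by
  have heq : {μ : ProbabilityMeasure Sq | IsSymmSq (μ : Measure Sq)} =
      {μ | μ.map (f := Prod.swap) (by fun_prop) = μ} :=
    Set.ext fun μ => ⟨fun h => Subtype.ext h, fun h => congrArg Subtype.val h⟩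
  rw [heq]
  exact isClosed_eq (ProbabilityMeasure.continuous_map continuous_swap) continuous_id

instance : CompactSpace SGraphon :=
  isCompact_iff_compactSpace.mp isClosed_setOf_isSymmSq.isCompact

theorem continuous_integral {g : Sq → ℝ} (hg : Continuous g) :
    Continuous fun ν : SGraphon => ∫ p, g p ∂ν.toMeasure :=
  (ProbabilityMeasure.continuous_integral_continuousMap (⟨g, hg⟩ : C(Sq, ℝ))).comp
    continuous_subtype_val

theorem tendsto_of_integral {ι : Type*} {l : Filter ι} {γ : ι → SGraphon} {ν : SGraphon}
    (h : ∀ g : Sq → ℝ, Continuous g →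
      Tendsto (fun i => ∫ p, g p ∂(γ i).toMeasure) l (𝓝 (∫ p, g p ∂ν.toMeasure))) :
    Tendsto γ l (𝓝 ν) :=
  tendsto_subtype_rng.mpr <|
    ProbabilityMeasure.tendsto_iff_forall_integral_tendsto.mpr fun g => h g g.continuous

/-- The s-graphon with density `q` with respect to Lebesgue measure on the square. -/
def ofDensity (q : Sq → ℝ) (hq : Measurable q) (hq0 : ∀ p, 0 ≤ q p) (hqi : Integrable q)
    (hq1 : ∫ p, q p = 1) (hqs : ∀ p, q p.swap = q p) : SGraphon :=
  ⟨⟨volume.withDensity fun p => ENNReal.ofReal (q p),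
    isProbabilityMeasure_withDensity_ofReal hqi hq0 hq1⟩, by
    have h := measurePreserving_withDensity (f := Prod.swap) (μ := (volume : Measure Sq))
      Measure.measurePreserving_swap hq.ennreal_ofReal
    simp only [hqs] at h
    exact h.map_eq⟩

end SGraphon

namespace IsFracPartition

variable {k : ℕ} {F : Fin k → unitInterval → ℝ}

theorem measurable (hF : IsFracPartition k F) (i : Fin k) : Measurable (F i) := hF.1 i

theorem nonneg (hF : IsFracPartition k F) (i : Fin k) (x : unitInterval) : 0 ≤ F i x := hF.2.1 i x

theorem sum_eq_one (hF : IsFracPartition k F) (x : unitInterval) : ∑ i, F i x = 1 := hF.2.2.1 x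

theorem integral_eq (hF : IsFracPartition k F) (i : Fin k) : ∫ x, F i x = 1 / k := hF.2.2.2 i

theorem pos (hF : IsFracPartition k F) : 0 < k := by
  rcases k.eq_zero_or_pos with rfl | hk
  · simpa using hF.sum_eq_one 0
  · exact hk

theorem le_one (hF : IsFracPartition k F) (i : Fin k) (x : unitInterval) : F i x ≤ 1 :=
  (Finset.single_le_sum (fun j _ => hF.nonneg j x) (Finset.mem_univ i)).trans_eq (hF.sum_eq_one x)

theorem abs_le_one (hF : IsFracPartition k F) (i : Fin k) (x : unitInterval) : |F i x| ≤ 1 :=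
  abs_le.mpr ⟨by linarith [hF.nonneg i x], hF.le_one i x⟩

protected theorem mul_nonneg (hF : IsFracPartition k F) (i j : Fin k) (x y : unitInterval) :
    0 ≤ F i x * F j y :=
  mul_nonneg (hF.nonneg i x) (hF.nonneg j y)

theorem mul_le_one (hF : IsFracPartition k F) (i j : Fin k) (x y : unitInterval) :
    F i x * F j y ≤ 1 :=
  mul_le_one₀ (hF.le_one i x) (hF.nonneg j y) (hF.le_one j y)

theorem abs_mul_le_one (hF : IsFracPartition k F) (i j : Fin k) (x y : unitInterval) :
    |F i x * F j y| ≤ 1 := by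
  rw [abs_of_nonneg (hF.mul_nonneg i j x y)]
  exact hF.mul_le_one i j x y

theorem measurable_mul (hF : IsFracPartition k F) (i j : Fin k) :
    Measurable fun p : Sq => F i p.1 * F j p.2 :=
  ((hF.measurable i).comp measurable_fst).mul ((hF.measurable j).comp measurable_snd)

theorem integrable_mul (hF : IsFracPartition k F) (i j : Fin k) (μ : Measure Sq)
    [IsFiniteMeasure μ] : Integrable (fun p : Sq => F i p.1 * F j p.2) μ :=
  integrable_of_abs_le (hF.measurable_mul i j) fun _ => hF.abs_mul_le_one _ _ _ _

end IsFracPartition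

section Mstar

variable {k : ℕ}

instance : FirstCountableTopology (Matrix (Fin k) (Fin k) ℝ) :=
  inferInstanceAs (FirstCountableTopology (Fin k → Fin k → ℝ))

theorem entry_le_sum {m n : Type*} [Fintype m] [Fintype n] {M : Matrix m n ℝ}
    (hM : ∀ i j, 0 ≤ M i j) (i : m) (j : n) : M i j ≤ ∑ i, ∑ j, M i j :=
  calc M i j ≤ ∑ j, M i j := Finset.single_le_sum (fun j _ => hM i j) (Finset.mem_univ j)
    _ ≤ ∑ i, ∑ j, M i j := Finset.single_le_sum (f := fun i => ∑ j, M i j)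
        (fun i _ => Finset.sum_nonneg fun j _ => hM i j) (Finset.mem_univ i)

theorem le_one_of_mem_Mstar {M : Matrix (Fin k) (Fin k) ℝ} (hM : M ∈ Mstar k) (i j : Fin k) :
    M i j ≤ 1 :=
  (entry_le_sum hM.2.1 i j).trans_eq hM.2.2

theorem isClosed_Mstar (k : ℕ) : IsClosed (Mstar k) := by
  simp only [Mstar, Set.ofPred_and, Set.ofPred_forall, Matrix.IsSymm]
  refine (isClosed_eq (by fun_prop) (by fun_prop)).inter
    (.inter (isClosed_iInter fun i => isClosed_iInter fun j => ?_)
      (isClosed_eq (by fun_prop) (by fun_prop)))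
  exact isClosed_le (by fun_prop) (by fun_prop)

theorem isCompact_Mstar (k : ℕ) : IsCompact (Mstar k) := by
  have hbox : IsCompact (Set.univ.pi fun _ : Fin k => Set.univ.pi fun _ : Fin k =>
      Set.Icc (0 : ℝ) 1) :=
    isCompact_univ_pi fun _ => isCompact_univ_pi fun _ => isCompact_Icc
  exact hbox.of_isClosed_subset (isClosed_Mstar k) fun M hM i _ j _ =>
    ⟨hM.2.1 i j, le_one_of_mem_Mstar hM i j⟩

instance : CompactSpace (Mstar k) := isCompact_iff_compactSpace.mp (isCompact_Mstar k)

end Mstar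

/-- The step matrix `(∫ F_i ⊗ F_j dμ)_{i,j}` of a measure `μ` on the square along a family `F`. -/
def densityMatrix {k : ℕ} (F : Fin k → unitInterval → ℝ) (μ : Measure Sq) :
    Matrix (Fin k) (Fin k) ℝ :=
  fun i j => ∫ p, F i p.1 * F j p.2 ∂μ

namespace IsFracPartition

variable {k : ℕ} {F : Fin k → unitInterval → ℝ}

theorem densityMatrix_mem_Mstar (hF : IsFracPartition k F) (ν : SGraphon) :
    densityMatrix F ν.toMeasure ∈ Mstar k := by
  refine ⟨Matrix.IsSymm.ext fun i j => ?_,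
    fun i j => integral_nonneg fun p => hF.mul_nonneg i j p.1 p.2, ?_⟩
  · calc ∫ p, F j p.1 * F i p.2 ∂ν.toMeasure
        = ∫ p, F j p.1 * F i p.2 ∂ν.toMeasure.map Prod.swap := by rw [ν.map_swap]
      _ = ∫ p, F j p.2 * F i p.1 ∂ν.toMeasure :=
        integral_map measurable_swap.aemeasurable (hF.measurable_mul j i).aestronglyMeasurable
      _ = ∫ p, F i p.1 * F j p.2 ∂ν.toMeasure := by simp only [mul_comm]
  · have hint := fun i j => hF.integrable_mul i j ν.toMeasure
    calc ∑ i, ∑ j, ∫ p, F i p.1 * F j p.2 ∂ν.toMeasure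
        = ∫ p, ∑ i, ∑ j, F i p.1 * F j p.2 ∂ν.toMeasure := by
          rw [integral_finsetSum _ fun i _ => integrable_finsetSum _ fun j _ => hint i j]
          simp_rw [integral_finsetSum _ fun j _ => hint _ j]
      _ = 1 := by simp [← Finset.mul_sum, hF.sum_eq_one]

/-- `densityMatrix` as a map from s-graphons to the compact space `Mstar k`. -/
def toMstar (hF : IsFracPartition k F) (ν : SGraphon) : Mstar k :=
  ⟨densityMatrix F ν.toMeasure, hF.densityMatrix_mem_Mstar ν⟩

theorem continuous_toMstar (hF : IsFracPartition k F) (hFc : ∀ i, Continuous (F i)) :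
    Continuous hF.toMstar :=
  Continuous.subtype_mk (continuous_matrix fun i j => SGraphon.continuous_integral
    (((hFc i).comp continuous_fst).mul ((hFc j).comp continuous_snd))) _

end IsFracPartition

/-- The `k`-shape of an s-graphon as a subset of the compact space `Mstar k`. -/
def kShapeStar (μ : SGraphon) (k : ℕ) : Set (Mstar k) :=
  closure {M | ∃ (F : Fin k → unitInterval → ℝ) (hF : IsFracPartition k F), hF.toMstar μ = M}

theorem image_val_kShapeStar (μ : SGraphon) (k : ℕ) :
    Subtype.val '' kShapeStar μ k = kShape μ.toMeasure k := by
  rw [kShapeStar, ← (isClosed_Mstar k).isClosedEmbedding_subtypeVal.closure_image_eq, kShape]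
  congr 1
  ext M
  constructor
  · rintro ⟨-, ⟨F, hF, rfl⟩, rfl⟩
    exact ⟨F, hF, fun i j => rfl⟩
  · rintro ⟨F, hF, hM⟩
    exact ⟨hF.toMstar μ, ⟨F, hF, rfl⟩, Matrix.ext fun i j => (hM i j).symm⟩

/-- The density of the step s-graphon with matrix `M`, with the step functions replaced by `h`. -/
def blowupDensity {k : ℕ} (h : Fin k → unitInterval → ℝ) (M : Matrix (Fin k) (Fin k) ℝ) (p : Sq) :
    ℝ :=
  (k : ℝ) ^ 2 * ∑ a, ∑ b, M a b * (h a p.1 * h b p.2)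

theorem blowupDensity_swap {k : ℕ} (h : Fin k → unitInterval → ℝ) {M : Matrix (Fin k) (Fin k) ℝ}
    (hM : M.IsSymm) (p : Sq) : blowupDensity h M p.swap = blowupDensity h M p := by
  rw [blowupDensity, blowupDensity, Finset.sum_comm]
  simp only [hM.apply, Prod.fst_swap, Prod.snd_swap, mul_comm (h _ p.1)]

namespace IsFracPartition

variable {k : ℕ} {h : Fin k → unitInterval → ℝ}

theorem measurable_blowupDensity (hh : IsFracPartition k h) (M : Matrix (Fin k) (Fin k) ℝ) :
    Measurable (blowupDensity h M) :=
  (Finset.measurable_fun_sum _ fun a _ => Finset.measurable_fun_sum _ fun b _ =>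
    (hh.measurable_mul a b).const_mul (M a b)).const_mul _

theorem blowupDensity_nonneg (hh : IsFracPartition k h) {M : Matrix (Fin k) (Fin k) ℝ}
    (hM : M ∈ Mstar k) (p : Sq) : 0 ≤ blowupDensity h M p :=
  mul_nonneg (by positivity) <| Finset.sum_nonneg fun a _ => Finset.sum_nonneg fun b _ =>
    mul_nonneg (hM.2.1 a b) (hh.mul_nonneg a b p.1 p.2)

theorem blowupDensity_le (hh : IsFracPartition k h) {M : Matrix (Fin k) (Fin k) ℝ}
    (hM : M ∈ Mstar k) (p : Sq) : blowupDensity h M p ≤ (k : ℝ) ^ 2 := by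
  refine mul_le_of_le_one_right (by positivity) (le_of_le_of_eq ?_ hM.2.2)
  exact Finset.sum_le_sum fun a _ => Finset.sum_le_sum fun b _ =>
    mul_le_of_le_one_right (hM.2.1 a b) (hh.mul_le_one a b p.1 p.2)

theorem integral_mul (hh : IsFracPartition k h) (a b : Fin k) :
    ∫ p : Sq, h a p.1 * h b p.2 = 1 / (k : ℝ) ^ 2 := by
  rw [Measure.volume_eq_prod, integral_prod_mul, hh.integral_eq, hh.integral_eq]
  ring

theorem abs_blowupDensity_le (hh : IsFracPartition k h) {M : Matrix (Fin k) (Fin k) ℝ}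
    (hM : M ∈ Mstar k) (p : Sq) : |blowupDensity h M p| ≤ (k : ℝ) ^ 2 := by
  rw [abs_of_nonneg (hh.blowupDensity_nonneg hM p)]
  exact hh.blowupDensity_le hM p

theorem integral_blowupDensity (hh : IsFracPartition k h) {M : Matrix (Fin k) (Fin k) ℝ}
    (hM : M ∈ Mstar k) : ∫ p, blowupDensity h M p = 1 := by
  have hint := fun a b => (hh.integrable_mul a b volume).const_mul (M a b)
  have hk : (k : ℝ) ≠ 0 := Nat.cast_ne_zero.mpr hh.pos.ne'
  calc ∫ p, blowupDensity h M p
      = (k : ℝ) ^ 2 * ∑ a, ∑ b, ∫ p : Sq, M a b * (h a p.1 * h b p.2) := by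
        simp only [blowupDensity]
        rw [integral_const_mul,
          integral_finsetSum _ fun a _ => integrable_finsetSum _ fun b _ => hint a b]
        simp_rw [integral_finsetSum _ fun b _ => hint _ b]
    _ = (k : ℝ) ^ 2 * ((∑ a, ∑ b, M a b) * (1 / (k : ℝ) ^ 2)) := by
        simp only [integral_const_mul, hh.integral_mul, Finset.sum_mul]
    _ = 1 := by rw [hM.2.2]; field_simp

/-- The s-graphon with density `blowupDensity h M`. -/
def blowup (hh : IsFracPartition k h) (M : Mstar k) : SGraphon :=
  .ofDensity (blowupDensity h M) (hh.measurable_blowupDensity M) (hh.blowupDensity_nonneg M.2)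
    (integrable_of_abs_le (hh.measurable_blowupDensity M) (hh.abs_blowupDensity_le M.2))
    (hh.integral_blowupDensity M.2) (blowupDensity_swap h M.2.1)

theorem toMeasure_blowup (hh : IsFracPartition k h) (M : Mstar k) :
    (hh.blowup M).toMeasure = volume.withDensity fun p => ENNReal.ofReal (blowupDensity h M p) :=
  rfl

theorem integral_blowup (hh : IsFracPartition k h) (M : Mstar k) (g : Sq → ℝ) :
    ∫ p, g p ∂(hh.blowup M).toMeasure = ∫ p, blowupDensity h M p * g p := by
  rw [hh.toMeasure_blowup, integral_withDensity_ofReal (hh.measurable_blowupDensity M)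
    (hh.blowupDensity_nonneg M.2)]

end IsFracPartition

/-- Convergence of the families `h n` to `F` at both coordinates of `μ`-almost every point of the
square. -/
def CoordTendsto {ι : Type*} {k : ℕ} (h : ι → Fin k → unitInterval → ℝ) (l : Filter ι)
    (F : Fin k → unitInterval → ℝ) (μ : Measure Sq) : Prop :=
  ∀ᵐ p ∂μ, ∀ i, Tendsto (fun n => h n i p.1) l (𝓝 (F i p.1)) ∧
    Tendsto (fun n => h n i p.2) l (𝓝 (F i p.2))

section CoordTendsto

variable {ι : Type*} {l : Filter ι} [l.IsCountablyGenerated] {k : ℕ}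
  {h : ι → Fin k → unitInterval → ℝ} {F : Fin k → unitInterval → ℝ}

theorem tendsto_toMstar (hh : ∀ n, IsFracPartition k (h n)) (hF : IsFracPartition k F)
    {ν : SGraphon} (hlim : CoordTendsto h l F ν.toMeasure) :
    Tendsto (fun n => (hh n).toMstar ν) l (𝓝 (hF.toMstar ν)) := by
  refine tendsto_subtype_rng.mpr <| tendsto_pi_nhds.mpr fun i => tendsto_pi_nhds.mpr fun j => ?_
  refine tendsto_integral_filter_of_dominated_convergence (fun _ => 1)
    (.of_forall fun n => ((hh n).measurable_mul i j).aestronglyMeasurable)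
    (.of_forall fun n => .of_forall fun p => (hh n).abs_mul_le_one i j p.1 p.2)
    (integrable_const 1) ?_
  filter_upwards [hlim] with p hp using (hp i).1.mul (hp j).2

theorem tendsto_integral_blowup (hh : ∀ n, IsFracPartition k (h n)) (hF : IsFracPartition k F)
    (hlim : CoordTendsto h l F volume) {M : ι → Mstar k} {M₀ : Mstar k} (hM : Tendsto M l (𝓝 M₀))
    {g : ι → Sq → ℝ} {g₀ : Sq → ℝ} (hg : ∀ n, Measurable (g n)) {C : ℝ}
    (hC : ∀ n p, |g n p| ≤ C) (hglim : ∀ᵐ p, Tendsto (fun n => g n p) l (𝓝 (g₀ p))) :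
    Tendsto (fun n => ∫ p, g n p ∂((hh n).blowup (M n)).toMeasure) l
      (𝓝 (∫ p, g₀ p ∂(hF.blowup M₀).toMeasure)) := by
  simp only [IsFracPartition.integral_blowup]
  have hMab : ∀ a b, Tendsto (fun n => (M n : Matrix (Fin k) (Fin k) ℝ) a b) l
      (𝓝 ((M₀ : Matrix (Fin k) (Fin k) ℝ) a b)) := fun a b =>
    (tendsto_subtype_rng.mp hM).apply_nhds a |>.apply_nhds b
  refine tendsto_integral_filter_of_dominated_convergence (fun _ => (k : ℝ) ^ 2 * C)
    (.of_forall fun n => (((hh n).measurable_blowupDensity _).mul (hg n)).aestronglyMeasurable)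
    (.of_forall fun n => .of_forall fun p => ?_) (integrable_const _) ?_
  · rw [Real.norm_eq_abs, abs_mul]
    exact mul_le_mul ((hh n).abs_blowupDensity_le (M n).2 p) (hC n p) (abs_nonneg _) (by positivity)
  · filter_upwards [hlim, hglim] with p hp hgp
    refine Tendsto.mul (.const_mul _ (tendsto_finsetSum _ fun a _ => tendsto_finsetSum _
      fun b _ => (hMab a b).mul ((hp a).1.mul (hp b).2))) hgp

theorem tendsto_blowup (hh : ∀ n, IsFracPartition k (h n)) (hF : IsFracPartition k F)
    (hlim : CoordTendsto h l F volume) {M : ι → Mstar k} {M₀ : Mstar k}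
    (hM : Tendsto M l (𝓝 M₀)) :
    Tendsto (fun n => (hh n).blowup (M n)) l (𝓝 (hF.blowup M₀)) := by
  refine SGraphon.tendsto_of_integral fun g hg => ?_
  obtain ⟨C, hC⟩ := isCompact_univ.exists_bound_of_continuousOn hg.continuousOn
  exact tendsto_integral_blowup hh hF hlim hM (fun _ => hg.measurable)
    (fun _ p => hC p (Set.mem_univ p)) (.of_forall fun _ => tendsto_const_nhds)

theorem tendsto_toMstar_blowup (hh : ∀ n, IsFracPartition k (h n)) (hF : IsFracPartition k F)
    (hlim : CoordTendsto h l F volume) (M : Mstar k) :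
    Tendsto (fun n => (hh n).toMstar ((hh n).blowup M)) l (𝓝 (hF.toMstar (hF.blowup M))) := by
  refine tendsto_subtype_rng.mpr <| tendsto_pi_nhds.mpr fun i => tendsto_pi_nhds.mpr fun j => ?_
  refine tendsto_integral_blowup hh hF hlim tendsto_const_nhds
    (fun n => (hh n).measurable_mul i j) (fun n p => (hh n).abs_mul_le_one i j p.1 p.2) ?_
  filter_upwards [hlim] with p hp using (hp i).1.mul (hp j).2

end CoordTendsto

theorem IsFracPartition.continuous_blowup {k : ℕ} {h : Fin k → unitInterval → ℝ}
    (hh : IsFracPartition k h) : Continuous hh.blowup :=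
  continuous_iff_continuousAt.mpr fun _ => tendsto_blowup (fun _ => hh) hh
    (.of_forall fun _ _ => ⟨tendsto_const_nhds, tendsto_const_nhds⟩) tendsto_id

/-- A continuous retraction of `ℝᵏ` onto the standard simplex: truncate the negative coordinates,
raise the sum to at least `1` by adding a constant, then rescale. -/
def simplexRetraction {k : ℕ} (y : Fin k → ℝ) (i : Fin k) : ℝ :=
  (max (y i) 0 + (max (∑ j, max (y j) 0) 1 - ∑ j, max (y j) 0) / k) / max (∑ j, max (y j) 0) 1

section SimplexRetraction

variable {k : ℕ}

theorem simplexRetraction_nonneg (y : Fin k → ℝ) (i : Fin k) : 0 ≤ simplexRetraction y i := by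
  have hle := sub_nonneg.mpr (le_max_left (∑ j, max (y j) 0) 1)
  unfold simplexRetraction
  positivity

theorem sum_simplexRetraction (hk : 0 < k) (y : Fin k → ℝ) : ∑ i, simplexRetraction y i = 1 := by
  have hmax : max (∑ j, max (y j) 0) 1 ≠ 0 := by positivity
  have : (k : ℝ) ≠ 0 := by positivity
  simp only [simplexRetraction, ← Finset.sum_div, Finset.sum_add_distrib, Finset.sum_const,
    Finset.card_univ, Fintype.card_fin, nsmul_eq_mul]
  field_simp
  ring

theorem simplexRetraction_of_mem {y : Fin k → ℝ} (hy0 : ∀ i, 0 ≤ y i) (hy1 : ∑ i, y i = 1) :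
    simplexRetraction y = y := by
  ext i
  simp [simplexRetraction, max_eq_left (hy0 _), hy1]

theorem continuous_simplexRetraction (i : Fin k) :
    Continuous fun y : Fin k → ℝ => simplexRetraction y i := by
  unfold simplexRetraction
  exact Continuous.div (by fun_prop) (by fun_prop) fun y => by positivity

end SimplexRetraction

-- Adding constants equalises the integrals; the extra `e` keeps the functions non-negative, and
-- rescaling restores the sum `1`.
theorem isFracPartition_of_integral_near {k : ℕ} (hk : 0 < k) {R : Fin k → unitInterval → ℝ}
    (hRm : ∀ i, Measurable (R i)) (hR0 : ∀ i x, 0 ≤ R i x) (hR1 : ∀ x, ∑ i, R i x = 1) {e : ℝ}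
    (he : ∀ i, |(∫ x, R i x) - 1 / k| ≤ e) :
    IsFracPartition k fun i x => (R i x + (1 / k - (∫ y, R i y) + e)) / (1 + k * e) := by
  have : (0 : ℝ) < k := by positivity
  have he0 : 0 ≤ e := (abs_nonneg _).trans (he ⟨0, hk⟩)
  have hden : 0 < 1 + k * e := by positivity
  have hRi : ∀ i, Integrable (R i) := fun i => integrable_of_abs_le (hRm i) (C := 1) fun x => by
    rw [abs_of_nonneg (hR0 i x), ← hR1 x]
    exact Finset.single_le_sum (f := fun i => R i x) (fun j _ => hR0 j x) (Finset.mem_univ i)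
  have hsum : ∑ i, ∫ x, R i x = 1 := by
    rw [← integral_finsetSum _ fun i _ => hRi i]
    simp [hR1]
  refine ⟨fun i => ((hRm i).add_const _).div_const _,
    fun i x => div_nonneg ?_ hden.le, fun x => ?_, fun i => ?_⟩
  · linarith [hR0 i x, (abs_le.mp (he i)).2]
  · rw [← Finset.sum_div, div_eq_one_iff_eq hden.ne']
    simp only [Finset.sum_add_distrib, Finset.sum_sub_distrib, hR1, hsum, Finset.sum_const,
      Finset.card_univ, Fintype.card_fin, nsmul_eq_mul]
    field_simp
    ring
  · rw [integral_div, integral_add (hRi i) (integrable_const _), integral_const, probReal_univ,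
      one_smul]
    field_simp
    ring

namespace IsFracPartition

variable {k : ℕ} {F : Fin k → unitInterval → ℝ}

theorem exists_seq_continuous_simplex_tendsto_ae (hF : IsFracPartition k F)
    (ρ : Measure unitInterval) [IsFiniteMeasure ρ] :
    ∃ R : ℕ → Fin k → unitInterval → ℝ, (∀ n i, Continuous (R n i)) ∧
      (∀ n i x, 0 ≤ R n i x) ∧ (∀ n x, ∑ i, R n i x = 1) ∧
      ∀ᵐ x ∂ρ, ∀ i, Tendsto (fun n => R n i x) atTop (𝓝 (F i x)) := by
  choose g hgc hg using fun i => exists_seq_continuous_tendsto_ae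
    (integrable_of_abs_le (μ := ρ) (hF.measurable i) (hF.abs_le_one i))
  refine ⟨fun n i x => simplexRetraction (fun j => g j n x) i,
    fun n i => (continuous_simplexRetraction i).comp (continuous_pi fun j => hgc j n),
    fun _ i _ => simplexRetraction_nonneg _ i, fun _ _ => sum_simplexRetraction hF.pos _, ?_⟩
  filter_upwards [ae_all_iff.mpr hg] with x hx i
  have hlim := ((continuous_simplexRetraction i).tendsto _).comp (tendsto_pi_nhds.mpr hx)
  rwa [simplexRetraction_of_mem (fun j => hF.nonneg j x) (hF.sum_eq_one x)] at hlim

theorem exists_seq_continuous_tendsto_ae (hF : IsFracPartition k F) (ρ : Measure unitInterval)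
    [IsFiniteMeasure ρ] :
    ∃ h : ℕ → Fin k → unitInterval → ℝ, (∀ n, IsFracPartition k (h n)) ∧
      (∀ n i, Continuous (h n i)) ∧
      ∀ᵐ x ∂ρ, ∀ i, Tendsto (fun n => h n i x) atTop (𝓝 (F i x)) := by
  obtain ⟨R, hRc, hR0, hR1, hRF⟩ := hF.exists_seq_continuous_simplex_tendsto_ae (ρ + volume)
  rw [ae_add_measure_iff] at hRF
  have hint : ∀ i, Tendsto (fun n => (1 / k : ℝ) - ∫ x, R n i x) atTop (𝓝 0) := by
    intro i
    have hlim : Tendsto (fun n => ∫ x, R n i x) atTop (𝓝 (∫ x, F i x)) := by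
      refine tendsto_integral_of_dominated_convergence (fun _ => 1)
        (fun n => (hRc n i).aestronglyMeasurable) (integrable_const 1)
        (fun n => .of_forall fun x => ?_) (hRF.2.mono fun x hx => hx i)
      rw [Real.norm_of_nonneg (hR0 n i x), ← hR1 n x]
      exact Finset.single_le_sum (f := fun i => R n i x) (fun j _ => hR0 n j x) (Finset.mem_univ i)
    simpa only [hF.integral_eq, sub_self] using hlim.const_sub (1 / k : ℝ)
  let e : ℕ → ℝ := fun n => ∑ i, |(∫ x, R n i x) - 1 / k|
  have he : Tendsto e atTop (𝓝 0) := by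
    simpa [e, abs_sub_comm] using tendsto_finsetSum Finset.univ fun i _ => (hint i).abs
  refine ⟨fun n i x => (R n i x + (1 / k - (∫ y, R n i y) + e n)) / (1 + k * e n),
    fun n => isFracPartition_of_integral_near hF.pos (fun i => (hRc n i).measurable) (hR0 n) (hR1 n)
      fun i => Finset.single_le_sum (f := fun i => |(∫ x, R n i x) - 1 / k|)
        (fun j _ => abs_nonneg _) (Finset.mem_univ i),
    fun n i => by have := hRc n i; fun_prop, ?_⟩
  filter_upwards [hRF.1] with x hx i
  have hlim := ((hx i).add ((hint i).add he)).div ((he.const_mul (k : ℝ)).const_add 1) (by simp)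
  simp only [mul_zero, add_zero, div_one] at hlim
  exact hlim

theorem exists_seq_continuous_coordTendsto (hF : IsFracPartition k F) (μ : Measure Sq)
    [IsFiniteMeasure μ] :
    ∃ h : ℕ → Fin k → unitInterval → ℝ, (∀ n, IsFracPartition k (h n)) ∧
      (∀ n i, Continuous (h n i)) ∧ CoordTendsto h atTop F μ := by
  obtain ⟨h, hh, hhc, hlim⟩ :=
    hF.exists_seq_continuous_tendsto_ae (μ.map Prod.fst + μ.map Prod.snd)
  rw [ae_add_measure_iff] at hlim
  refine ⟨h, hh, hhc, ?_⟩
  filter_upwards [ae_of_ae_map measurable_fst.aemeasurable hlim.1,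
    ae_of_ae_map measurable_snd.aemeasurable hlim.2] with p hp₁ hp₂ i using ⟨hp₁ i, hp₂ i⟩

end IsFracPartition

theorem abs_integral_mul_sub_le {α : Type*} [MeasurableSpace α] {μ : Measure α} {w g : α → ℝ}
    {c ε : ℝ} (hw0 : ∀ x, 0 ≤ w x) (hwi : Integrable w μ) (hw1 : ∫ x, w x ∂μ = 1)
    (hwg : Integrable (fun x => w x * g x) μ) (hg : ∀ x, w x ≠ 0 → |g x - c| ≤ ε) :
    |∫ x, w x * g x ∂μ - c| ≤ ε := by
  have hpoint : ∀ x, |w x * g x - w x * c| ≤ w x * ε := fun x => by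
    rcases eq_or_ne (w x) 0 with hx | hx
    · simp [hx]
    · rw [← mul_sub, abs_mul, abs_of_nonneg (hw0 x)]
      exact mul_le_mul_of_nonneg_left (hg x hx) (hw0 x)
  calc |∫ x, w x * g x ∂μ - c|
      = |∫ x, (w x * g x - w x * c) ∂μ| := by
        rw [integral_sub hwg (hwi.mul_const c), integral_mul_const, hw1, one_mul]
    _ ≤ ∫ x, w x * ε ∂μ :=
        norm_integral_le_of_norm_le (f := fun x => w x * g x - w x * c) (hwi.mul_const ε)
          (.of_forall hpoint)
    _ = ε := by rw [integral_mul_const, hw1, one_mul]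

namespace FairlyDistributed

variable {f : Sq → ℝ}

theorem exists_abs_le (hf : FairlyDistributed f) : ∃ C, 0 ≤ C ∧ ∀ p, |f p| ≤ C := by
  obtain ⟨C, hC⟩ := hf.bounded
  exact ⟨C, (hf.nonneg (0, 0)).trans (hC _), fun p => (abs_of_nonneg (hf.nonneg p)).trans_le (hC p)⟩

theorem phiFn_nonneg (hf : FairlyDistributed f) (μ : Measure Sq) (p : Sq) : 0 ≤ phiFn f μ p :=
  integral_nonneg fun _ => mul_nonneg (hf.nonneg _) (hf.nonneg _)

theorem measurable_phiFn (hf : FairlyDistributed f) (μ : Measure Sq) [SFinite μ] :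
    Measurable (phiFn f μ) := by
  have hm := hf.measurable
  have huncurry : Measurable fun z : Sq × Sq => f (z.2.1, z.1.1) * f (z.2.2, z.1.2) := by fun_prop
  exact (huncurry.stronglyMeasurable.integral_prod_right (ν := μ)).measurable

theorem integrable_uncurry_mul (hf : FairlyDistributed f) (μ ν : Measure Sq) [IsFiniteMeasure μ]
    [IsFiniteMeasure ν] {g : Sq → ℝ} (hg : Measurable g) {C : ℝ} (hC : ∀ p, |g p| ≤ C) :
    Integrable (fun z : Sq × Sq => f (z.1.1, z.2.1) * f (z.1.2, z.2.2) * g z.2) (μ.prod ν) := by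
  have hm := hf.measurable
  obtain ⟨K, hK0, hK⟩ := hf.exists_abs_le
  refine integrable_of_abs_le (by fun_prop) (C := K * K * C) fun z => ?_
  rw [abs_mul, abs_mul]
  exact mul_le_mul (mul_le_mul (hK _) (hK _) (abs_nonneg _) hK0) (hC _) (abs_nonneg _)
    (mul_nonneg hK0 hK0)

theorem integral_PhiMeas (hf : FairlyDistributed f) (μ : Measure Sq) [IsFiniteMeasure μ]
    {g : Sq → ℝ} (hg : Measurable g) {C : ℝ} (hC : ∀ p, |g p| ≤ C) :
    ∫ p, g p ∂PhiMeas f μ = ∫ q : Sq, (∫ p : Sq, f (q.1, p.1) * f (q.2, p.2) * g p) ∂μ := by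
  rw [PhiMeas, integral_withDensity_ofReal (hf.measurable_phiFn μ) (hf.phiFn_nonneg μ)]
  simp only [phiFn, ← integral_mul_const]
  exact (integral_integral_swap (f := fun q p : Sq => f (q.1, p.1) * f (q.2, p.2) * g p)
    (hf.integrable_uncurry_mul μ volume hg hC)).symm

theorem abs_integral_PhiMeas_sub_le (hf : FairlyDistributed f) (μ : Measure Sq)
    [IsProbabilityMeasure μ] {g : Sq → ℝ} (hg : Measurable g) {C : ℝ} (hC : ∀ p, |g p| ≤ C) {ε : ℝ}
    (hfg : ∀ x u y v, f (x, u) ≠ 0 → f (y, v) ≠ 0 → |g (u, v) - g (x, y)| ≤ ε) :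
    |∫ p, g p ∂PhiMeas f μ - ∫ p, g p ∂μ| ≤ ε := by
  have hw : ∀ q : Sq, ∫ p : Sq, f (q.1, p.1) * f (q.2, p.2) = 1 := fun q => by
    rw [Measure.volume_eq_prod, integral_prod_mul (fun u => f (q.1, u)) (fun v => f (q.2, v)),
      hf.row, hf.row, one_mul]
  have hcell : ∀ q : Sq, |(∫ p : Sq, f (q.1, p.1) * f (q.2, p.2) * g p) - g q| ≤ ε := fun q => by
    have hwi := Integrable.of_integral_ne_zero (by rw [hw q]; exact one_ne_zero)
    exact abs_integral_mul_sub_le (fun p => mul_nonneg (hf.nonneg _) (hf.nonneg _)) hwi (hw q)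
      (hwi.mul_bdd hg.aestronglyMeasurable (.of_forall hC)) fun p hp =>
        hfg q.1 p.1 q.2 p.2 (left_ne_zero_of_mul hp) (right_ne_zero_of_mul hp)
  rw [hf.integral_PhiMeas μ hg hC, ← integral_sub
    (hf.integrable_uncurry_mul μ volume hg hC).integral_prod_left (integrable_of_abs_le hg hC)]
  simpa using norm_integral_le_of_norm_le_const (μ := μ)
    (f := fun q => (∫ p : Sq, f (q.1, p.1) * f (q.2, p.2) * g p) - g q) (.of_forall hcell)

end FairlyDistributed

/-- The average of `h` against the kernel `f`. -/
def kernelAverage (f : Sq → ℝ) (h : unitInterval → ℝ) (x : unitInterval) : ℝ :=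
  ∫ u, f (x, u) * h u

namespace IsFracPartition

variable {k : ℕ} {h : Fin k → unitInterval → ℝ}

theorem integrable_kernel_mul (hh : IsFracPartition k h) {f : Sq → ℝ} (hf : FairlyDistributed f)
    (i : Fin k) : Integrable fun p : Sq => f p * h i p.2 := by
  obtain ⟨C, -, hC⟩ := hf.exists_abs_le
  refine integrable_of_abs_le (hf.measurable.mul ((hh.measurable i).comp measurable_snd)) (C := C)
    fun p => ?_
  rw [abs_mul]
  exact (mul_le_of_le_one_right (abs_nonneg _) (hh.abs_le_one i p.2)).trans (hC p)

theorem isFracPartition_kernelAverage (hh : IsFracPartition k h) {f : Sq → ℝ}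
    (hf : FairlyDistributed f) :
    IsFracPartition k fun i => kernelAverage f (h i) := by
  have hrow : ∀ i x, Integrable fun u => f (x, u) * h i u := fun i x => by
    obtain ⟨C, -, hC⟩ := hf.exists_abs_le
    exact (integrable_of_abs_le (hh.measurable i) (hh.abs_le_one i)).bdd_mul
      (hf.measurable.comp measurable_prodMk_left).aestronglyMeasurable
      (.of_forall fun u => hC (x, u))
  refine ⟨fun i => ?_, fun i x => integral_nonneg fun u =>
    mul_nonneg (hf.nonneg _) (hh.nonneg i u), fun x => ?_, fun i => ?_⟩
  · have hm := hf.measurable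
    have huncurry : Measurable fun p : Sq => f p * h i p.2 :=
      hm.mul ((hh.measurable i).comp measurable_snd)
    exact (huncurry.stronglyMeasurable.integral_prod_right (ν := volume)).measurable
  · calc ∑ i, ∫ u, f (x, u) * h i u = ∫ u, f (x, u) := by
          rw [← integral_finsetSum _ fun i _ => hrow i x]
          simp only [← Finset.mul_sum, hh.sum_eq_one, mul_one]
      _ = 1 := hf.row x
  · calc ∫ x, ∫ u, f (x, u) * h i u = ∫ u, ∫ x, f (x, u) * h i u :=
          integral_integral_swap (f := fun x u => f (x, u) * h i u)
            (hh.integrable_kernel_mul hf i)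
      _ = 1 / k := by simp only [integral_mul_const, hf.col, one_mul, hh.integral_eq]

theorem densityMatrix_PhiMeas (hh : IsFracPartition k h) {f : Sq → ℝ} (hf : FairlyDistributed f)
    (μ : Measure Sq) [IsFiniteMeasure μ] :
    densityMatrix h (PhiMeas f μ) = densityMatrix (fun i => kernelAverage f (h i)) μ := by
  ext i j
  simp only [densityMatrix, kernelAverage]
  rw [hf.integral_PhiMeas μ (hh.measurable_mul i j) fun p => hh.abs_mul_le_one i j p.1 p.2]
  simp only [mul_mul_mul_comm (f _), ← integral_prod_mul]
  rfl

theorem mapsTo_toMstar (hh : IsFracPartition k h) (hhc : ∀ i, Continuous (h i)) (μ : SGraphon) :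
    Set.MapsTo hh.toMstar (shape μ) (kShapeStar μ k) := by
  refine Set.MapsTo.closure ?_ (hh.continuous_toMstar hhc)
  rintro ν ⟨f, hf, -, hν⟩
  refine ⟨_, hh.isFracPartition_kernelAverage hf, Subtype.ext ?_⟩
  simp only [toMstar, hν, hh.densityMatrix_PhiMeas hf]

end IsFracPartition

/-- The kernel `k ∑ₐ F_a ⊗ h_a`, along which `Φ` acts as `densityMatrix F` followed by the blowup
along `h`. -/
def partitionKernel {k : ℕ} (F h : Fin k → unitInterval → ℝ) (p : Sq) : ℝ :=
  k * ∑ a, F a p.1 * h a p.2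

namespace IsFracPartition

variable {k : ℕ} {F h : Fin k → unitInterval → ℝ}

theorem fairlyDistributed_partitionKernel (hF : IsFracPartition k F) (hh : IsFracPartition k h) :
    FairlyDistributed (partitionKernel F h) := by
  have hk : (k : ℝ) ≠ 0 := Nat.cast_ne_zero.mpr hF.pos.ne'
  have hFi := fun a => integrable_of_abs_le (μ := volume) (hF.measurable a) (hF.abs_le_one a)
  have hhi := fun a => integrable_of_abs_le (μ := volume) (hh.measurable a) (hh.abs_le_one a)
  refine ⟨?_, fun p => ?_, ⟨k * ∑ _ : Fin k, 1, fun p => ?_⟩, fun x => ?_, fun y => ?_⟩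
  · exact (Finset.measurable_fun_sum _ fun a _ => ((hF.measurable a).comp measurable_fst).mul
      ((hh.measurable a).comp measurable_snd)).const_mul _
  · exact mul_nonneg k.cast_nonneg <| Finset.sum_nonneg fun a _ =>
      mul_nonneg (hF.nonneg a _) (hh.nonneg a _)
  · exact mul_le_mul_of_nonneg_left (Finset.sum_le_sum fun a _ =>
      mul_le_one₀ (hF.le_one a _) (hh.nonneg a _) (hh.le_one a _)) k.cast_nonneg
  · simp only [partitionKernel]
    rw [integral_const_mul, integral_finsetSum _ fun a _ => (hhi a).const_mul _]
    simp only [integral_const_mul, hh.integral_eq, ← Finset.sum_mul, hF.sum_eq_one]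
    field_simp
  · simp only [partitionKernel]
    rw [integral_const_mul, integral_finsetSum _ fun a _ => (hFi a).mul_const _]
    simp only [integral_mul_const, hF.integral_eq, ← Finset.mul_sum, hh.sum_eq_one]
    field_simp

theorem phiFn_partitionKernel (hF : IsFracPartition k F) (h : Fin k → unitInterval → ℝ)
    (μ : Measure Sq) [IsFiniteMeasure μ] (p : Sq) :
    phiFn (partitionKernel F h) μ p = blowupDensity h (densityMatrix F μ) p := by
  have hint := fun a b => (hF.integrable_mul a b μ).mul_const (h a p.1 * h b p.2)
  calc phiFn (partitionKernel F h) μ p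
      = ∫ q, (k : ℝ) ^ 2 * ∑ a, ∑ b, F a q.1 * F b q.2 * (h a p.1 * h b p.2) ∂μ := by
        simp only [phiFn, partitionKernel, mul_mul_mul_comm (k : ℝ), Finset.sum_mul_sum, sq,
          mul_mul_mul_comm (F _ _)]
    _ = (k : ℝ) ^ 2 * ∑ a, ∑ b, ∫ q, F a q.1 * F b q.2 * (h a p.1 * h b p.2) ∂μ := by
        rw [integral_const_mul,
          integral_finsetSum _ fun a _ => integrable_finsetSum _ fun b _ => hint a b]
        simp_rw [integral_finsetSum _ fun b _ => hint _ b]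
    _ = blowupDensity h (densityMatrix F μ) p := by
        simp only [integral_mul_const, blowupDensity, densityMatrix]

theorem toMeasure_blowup_toMstar (hF : IsFracPartition k F) (hh : IsFracPartition k h)
    (ν : SGraphon) :
    (hh.blowup (hF.toMstar ν)).toMeasure = PhiMeas (partitionKernel F h) ν.toMeasure := by
  simp only [toMeasure_blowup, toMstar, PhiMeas, hF.phiFn_partitionKernel]

theorem blowup_toMstar_mem_shape (hF : IsFracPartition k F) (hh : IsFracPartition k h)
    (hhc : ∀ i, Continuous (h i)) (μ : SGraphon) : hh.blowup (hF.toMstar μ) ∈ shape μ := by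
  obtain ⟨G, hG, hGc, hlim⟩ := hF.exists_seq_continuous_coordTendsto μ.toMeasure
  refine mem_closure_of_tendsto ((hh.continuous_blowup.tendsto _).comp
    (tendsto_toMstar hG hF hlim)) (.of_forall fun n => ?_)
  refine ⟨_, (hG n).fairlyDistributed_partitionKernel hh, ?_, toMeasure_blowup_toMstar _ _ _⟩
  unfold partitionKernel
  have := hGc n
  fun_prop

theorem mapsTo_blowup (hh : IsFracPartition k h) (hhc : ∀ i, Continuous (h i)) (μ : SGraphon) :
    Set.MapsTo hh.blowup (kShapeStar μ k) (shape μ) := by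
  refine closure_minimal ?_ (isClosed_closure.preimage hh.continuous_blowup)
  rintro - ⟨F, hF, rfl⟩
  exact hF.blowup_toMstar_mem_shape hh hhc μ

end IsFracPartition

section Grid

variable {k : ℕ} (hk : 0 < k)

theorem measurable_gridIdx : Measurable (gridIdx k hk) := by
  have hfloor : Measurable fun u : unitInterval => ⌊(u : ℝ) * k⌋₊ := by fun_prop
  have hcap : Measurable fun n : ℕ => (⟨min n (k - 1),
    lt_of_le_of_lt (min_le_right _ _) (Nat.sub_lt hk one_pos)⟩ : Fin k) := measurable_from_top
  exact hcap.comp hfloor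

variable {hk}

theorem gridIdx_eq_of_mem_Ico {i : Fin k} {u : unitInterval}
    (hu : (u : ℝ) ∈ Set.Ico ((i : ℝ) / k) ((i + 1) / k)) : gridIdx k hk u = i := by
  have hk0 : (0 : ℝ) < k := Nat.cast_pos.mpr hk
  have hfloor : ⌊(u : ℝ) * k⌋₊ = i :=
    (Nat.floor_eq_iff (mul_nonneg u.2.1 hk0.le)).mpr
      ⟨(div_le_iff₀ hk0).mp hu.1, (lt_div_iff₀ hk0).mp hu.2⟩
  refine Fin.ext ?_
  simp only [gridIdx, hfloor]
  omega

theorem gridIdx_mem_Icc (u : unitInterval) :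
    (u : ℝ) ∈ Set.Icc ((gridIdx k hk u : ℝ) / k) ((gridIdx k hk u + 1) / k) := by
  have hk0 : (0 : ℝ) < k := Nat.cast_pos.mpr hk
  have hval : (gridIdx k hk u : ℕ) = min ⌊(u : ℝ) * k⌋₊ (k - 1) := rfl
  have hle : (gridIdx k hk u : ℝ) ≤ u * k :=
    (Nat.cast_le.mpr (hval.trans_le (min_le_left _ _))).trans
      (Nat.floor_le (mul_nonneg u.2.1 hk0.le))
  have hge : (u : ℝ) * k ≤ gridIdx k hk u + 1 := by
    rcases le_total ⌊(u : ℝ) * k⌋₊ (k - 1) with h | h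
    · rw [hval, min_eq_left h]
      exact (Nat.lt_floor_add_one _).le
    · rw [hval, min_eq_right h, Nat.cast_pred hk, sub_add_cancel]
      exact mul_le_of_le_one_left hk0.le u.2.2
  exact ⟨(div_le_iff₀ hk0).mpr hle, (le_div_iff₀ hk0).mpr hge⟩

theorem dist_le_of_gridIdx_eq {u v : unitInterval} (h : gridIdx k hk u = gridIdx k hk v) :
    dist u v ≤ 1 / k := by
  have hu := gridIdx_mem_Icc (hk := hk) u
  have hv := gridIdx_mem_Icc (hk := hk) v
  rw [h] at hu
  calc dist (u : ℝ) v ≤ (gridIdx k hk v + 1 : ℝ) / k - gridIdx k hk v / k :=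
        Real.dist_le_of_mem_Icc hu hv
    _ = 1 / k := by ring

theorem volume_real_gridIdx_eq (i : Fin k) : volume.real {u | gridIdx k hk u = i} = 1 / k := by
  have hk0 : (0 : ℝ) < k := Nat.cast_pos.mpr hk
  have hi : (i : ℝ) + 1 ≤ k := by exact_mod_cast i.2
  let a : unitInterval := ⟨(i : ℝ) / k, by positivity, (div_le_one hk0).mpr (by linarith)⟩
  let b : unitInterval := ⟨((i : ℝ) + 1) / k, by positivity, (div_le_one hk0).mpr hi⟩
  have hlower : volume (Set.Ico a b) ≤ volume {u | gridIdx k hk u = i} :=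
    measure_mono fun u hu => gridIdx_eq_of_mem_Ico hu
  have hupper : volume {u | gridIdx k hk u = i} ≤ volume (Set.Icc a b) :=
    measure_mono fun u (hu : gridIdx k hk u = i) => by subst hu; exact gridIdx_mem_Icc u
  have hlength : (b : ℝ) - a = 1 / k := by simp only [a, b]; ring
  rw [unitInterval.volume_Ico, hlength] at hlower
  rw [unitInterval.volume_Icc, hlength] at hupper
  rw [measureReal_def, le_antisymm hupper hlower, ENNReal.toReal_ofReal (by positivity)]

variable (hk)

/-- The partition of `[0,1]` into the indicators of the `k` grid intervals of length `1/k`. -/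
def gridPartition (i : Fin k) (u : unitInterval) : ℝ :=
  if gridIdx k hk u = i then 1 else 0

theorem isFracPartition_gridPartition : IsFracPartition k (gridPartition hk) := by
  have hcell : ∀ i, MeasurableSet {u | gridIdx k hk u = i} := fun i =>
    measurable_gridIdx hk (measurableSet_singleton i)
  refine ⟨fun i => .ite (hcell i) measurable_const measurable_const,
    fun i u => ite_nonneg zero_le_one le_rfl, fun u => by simp [gridPartition], fun i => ?_⟩
  have hind : gridPartition hk i = Set.indicator {u | gridIdx k hk u = i} 1 := by
    funext u
    simp [gridPartition, Set.indicator]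
  rw [hind, integral_indicator_one (hcell i), volume_real_gridIdx_eq]

theorem toMeasure_blowup_gridPartition (M : Mstar k) :
    ((isFracPartition_gridPartition hk).blowup M).toMeasure =
      muM (M : Matrix (Fin k) (Fin k) ℝ) := by
  rw [muM, dif_pos hk, IsFracPartition.toMeasure_blowup]
  simp [blowupDensity, gridPartition]

theorem toMstar_blowup_gridPartition (M : Mstar k) :
    (isFracPartition_gridPartition hk).toMstar ((isFracPartition_gridPartition hk).blowup M) =
      M := by
  have hgrid := isFracPartition_gridPartition hk
  have hk0 : (k : ℝ) ≠ 0 := Nat.cast_ne_zero.mpr hk.ne'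
  refine Subtype.ext <| Matrix.ext fun i j => ?_
  have hsupport : ∀ p : Sq, blowupDensity (gridPartition hk) M p *
      (gridPartition hk i p.1 * gridPartition hk j p.2) =
        (k : ℝ) ^ 2 * (M : Matrix (Fin k) (Fin k) ℝ) i j *
          (gridPartition hk i p.1 * gridPartition hk j p.2) := fun p => by
    by_cases hi : gridIdx k hk p.1 = i <;> by_cases hj : gridIdx k hk p.2 = j <;>
      simp [blowupDensity, gridPartition, hi, hj]
  calc ∫ p, gridPartition hk i p.1 * gridPartition hk j p.2 ∂(hgrid.blowup M).toMeasure
      = (k : ℝ) ^ 2 * (M : Matrix (Fin k) (Fin k) ℝ) i j * (1 / (k : ℝ) ^ 2) := by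
        simp only [hgrid.integral_blowup, hsupport, integral_const_mul, hgrid.integral_mul]
    _ = (M : Matrix (Fin k) (Fin k) ℝ) i j := by field_simp

theorem gridIdx_eq_of_partitionKernel_ne_zero {x u : unitInterval}
    (h : partitionKernel (gridPartition hk) (gridPartition hk) (x, u) ≠ 0) :
    gridIdx k hk x = gridIdx k hk u := by
  obtain ⟨a, -, ha⟩ := Finset.exists_ne_zero_of_sum_ne_zero (right_ne_zero_of_mul h)
  have hx : gridIdx k hk x = a := (ite_ne_right_iff.mp (left_ne_zero_of_mul ha)).1
  have hu : gridIdx k hk u = a := (ite_ne_right_iff.mp (right_ne_zero_of_mul ha)).1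
  rw [hx, hu]

end Grid

theorem tendsto_blowup_toMstar_gridPartition (ν : SGraphon) :
    Tendsto (fun k : ℕ => (isFracPartition_gridPartition k.succ_pos).blowup
      ((isFracPartition_gridPartition k.succ_pos).toMstar ν)) atTop (𝓝 ν) := by
  refine SGraphon.tendsto_of_integral fun g hg => Metric.tendsto_nhds.mpr fun ε hε => ?_
  obtain ⟨δ, hδ, hgδ⟩ := Metric.uniformContinuous_iff.mp
    (CompactSpace.uniformContinuous_of_continuous hg) (ε / 2) (half_pos hε)
  obtain ⟨C, hC⟩ := isCompact_univ.exists_bound_of_continuousOn hg.continuousOn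
  filter_upwards [tendsto_one_div_add_atTop_nhds_zero_nat.eventually_lt_const hδ] with k hk
  have hgrid := isFracPartition_gridPartition k.succ_pos
  have hcell : ∀ x u : unitInterval,
      partitionKernel (gridPartition k.succ_pos) (gridPartition k.succ_pos) (x, u) ≠ 0 →
        dist u x < δ := fun x u h =>
    calc dist u x ≤ 1 / (k + 1 : ℕ) :=
          dist_le_of_gridIdx_eq (gridIdx_eq_of_partitionKernel_ne_zero _ h).symm
      _ < δ := by rwa [Nat.cast_succ]
  rw [Real.dist_eq, hgrid.toMeasure_blowup_toMstar hgrid]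
  refine lt_of_le_of_lt ?_ (half_lt_self hε)
  exact (hgrid.fairlyDistributed_partitionKernel hgrid).abs_integral_PhiMeas_sub_le ν.toMeasure
    hg.measurable (fun p => hC p (Set.mem_univ p)) fun x u y v hxu hyv =>
      (hgδ (max_lt (hcell x u hxu) (hcell y v hyv))).le

theorem CoordTendsto.mono {ι : Type*} {l : Filter ι} {k : ℕ} {h : ι → Fin k → unitInterval → ℝ}
    {F : Fin k → unitInterval → ℝ} {μ ν : Measure Sq} (hlim : CoordTendsto h l F ν) (hμν : μ ≤ ν) :
    CoordTendsto h l F μ :=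
  ae_mono hμν hlim

theorem IsFracPartition.exists_continuous_blowup_toMstar_mem {k : ℕ}
    {F : Fin k → unitInterval → ℝ} (hF : IsFracPartition k F) {ν : SGraphon} {U : Set SGraphon}
    (hU : U ∈ 𝓝 (hF.blowup (hF.toMstar ν))) :
    ∃ (h : Fin k → unitInterval → ℝ) (hh : IsFracPartition k h), (∀ i, Continuous (h i)) ∧
      hh.blowup (hh.toMstar ν) ∈ U := by
  obtain ⟨h, hh, hhc, hlim⟩ := hF.exists_seq_continuous_coordTendsto (volume + ν.toMeasure)
  have hconv := tendsto_blowup hh hF (hlim.mono (Measure.le_add_right le_rfl))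
    (tendsto_toMstar hh hF (hlim.mono (Measure.le_add_left le_rfl)))
  obtain ⟨n, hn⟩ := (hconv.eventually hU).exists
  exact ⟨h n, hh n, hhc n, hn⟩

theorem IsFracPartition.exists_continuous_toMstar_blowup_mem {k : ℕ}
    {F : Fin k → unitInterval → ℝ} (hF : IsFracPartition k F) {M : Mstar k} {U : Set (Mstar k)}
    (hU : U ∈ 𝓝 (hF.toMstar (hF.blowup M))) :
    ∃ (h : Fin k → unitInterval → ℝ) (hh : IsFracPartition k h), (∀ i, Continuous (h i)) ∧
      hh.toMstar (hh.blowup M) ∈ U := by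
  obtain ⟨h, hh, hhc, hlim⟩ := hF.exists_seq_continuous_coordTendsto volume
  obtain ⟨n, hn⟩ := ((tendsto_toMstar_blowup hh hF hlim M).eventually hU).exists
  exact ⟨h n, hh n, hhc n, hn⟩

/-- The continuous fractional partitions into `k` parts. -/
def ContFracPartition (k : ℕ) : Type :=
  {h : Fin k → unitInterval → ℝ // IsFracPartition k h ∧ ∀ i, Continuous (h i)}

theorem vietorisTendsto_shape {γ : ℕ → SGraphon} {μ : SGraphon}
    (h : ∀ k, 0 < k → VietorisTendsto (fun n => kShapeStar (γ n) k) (kShapeStar μ k)) :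
    VietorisTendsto (fun n => shape (γ n)) (shape μ) := by
  refine vietorisTendsto_of_approx (ι := Σ k, ContFracPartition k)
    (p := fun i => i.2.2.1.toMstar) (q := fun i => i.2.2.1.blowup) isClosed_closure
    (fun i => h i.1 i.2.2.1.pos) (fun i => i.2.2.1.continuous_toMstar i.2.2.2)
    (fun i => i.2.2.1.continuous_blowup)
    (fun i n => i.2.2.1.mapsTo_toMstar i.2.2.2 (γ n)) (fun i => i.2.2.1.mapsTo_toMstar i.2.2.2 μ)
    (fun i n => i.2.2.1.mapsTo_blowup i.2.2.2 (γ n)) (fun i => i.2.2.1.mapsTo_blowup i.2.2.2 μ)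
    fun ν U hU => ?_
  obtain ⟨k, hk⟩ := ((tendsto_blowup_toMstar_gridPartition ν).eventually
    (eventually_mem_nhds_iff.mpr hU)).exists
  obtain ⟨g, hg, hgc, hgU⟩ :=
    (isFracPartition_gridPartition k.succ_pos).exists_continuous_blowup_toMstar_mem hk
  exact ⟨⟨k + 1, g, hg, hgc⟩, hgU⟩

theorem vietorisTendsto_kShapeStar {γ : ℕ → SGraphon} {μ : SGraphon}
    (h : VietorisTendsto (fun n => shape (γ n)) (shape μ)) {k : ℕ} (hk : 0 < k) :
    VietorisTendsto (fun n => kShapeStar (γ n) k) (kShapeStar μ k) := by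
  refine vietorisTendsto_of_approx (ι := ContFracPartition k)
    (p := fun i => i.2.1.blowup) (q := fun i => i.2.1.toMstar) isClosed_closure
    (fun _ => h) (fun i => i.2.1.continuous_blowup) (fun i => i.2.1.continuous_toMstar i.2.2)
    (fun i n => i.2.1.mapsTo_blowup i.2.2 (γ n)) (fun i => i.2.1.mapsTo_blowup i.2.2 μ)
    (fun i n => i.2.1.mapsTo_toMstar i.2.2 (γ n)) (fun i => i.2.1.mapsTo_toMstar i.2.2 μ)
    fun M U hU => ?_
  rw [← toMstar_blowup_gridPartition hk M] at hU
  obtain ⟨g, hg, hgc, hgU⟩ :=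
    (isFracPartition_gridPartition hk).exists_continuous_toMstar_blowup_mem hU
  exact ⟨⟨g, hg, hgc⟩, hgU⟩

theorem vietorisTendsto_kShapeStar_iff {γ : ℕ → SGraphon} {μ : SGraphon} {k : ℕ} :
    VietorisTendsto (fun n => kShapeStar (γ n) k) (kShapeStar μ k) ↔
      VietorisTendsto (fun n => kShape (γ n).toMeasure k) (kShape μ.toMeasure k) := by
  rw [← vietorisTendsto_image_iff IsInducing.subtypeVal]
  simp only [image_val_kShapeStar]

section AdjacencyMatrix

variable {m : ℕ} (G : SimpleGraph (Fin m))

theorem adjMat_nonneg (i j : Fin m) : 0 ≤ adjMat G i j := by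
  unfold adjMat
  split_ifs <;> norm_num

theorem isSymm_adjMat : (adjMat G).IsSymm :=
  Matrix.IsSymm.ext fun i j => by
    by_cases h : G.Adj i j <;> simp [adjMat, h, G.adj_comm j i]

variable {G}

theorem sum_adjMat_pos (hG : ∃ i j, G.Adj i j) : 0 < ∑ i, ∑ j, adjMat G i j := by
  obtain ⟨i, j, hij⟩ := hG
  calc 0 < adjMat G i j := by simp [adjMat, hij]
    _ ≤ ∑ i, ∑ j, adjMat G i j := entry_le_sum (adjMat_nonneg G) i j

theorem normAdj_mem_Mstar (hG : ∃ i j, G.Adj i j) : normAdj G ∈ Mstar m := by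
  have hpos := sum_adjMat_pos hG
  refine ⟨(isSymm_adjMat G).smul _, fun i j => ?_, ?_⟩
  · exact mul_nonneg (inv_nonneg.mpr hpos.le) (adjMat_nonneg G i j)
  · simp only [normAdj, Matrix.smul_apply, smul_eq_mul, ← Finset.mul_sum]
    exact inv_mul_cancel₀ hpos.ne'

theorem exists_toMeasure_eq_muM_normAdj (hG : ∃ i j, G.Adj i j) :
    ∃ γ : SGraphon, γ.toMeasure = muM (normAdj G) :=
  ⟨_, toMeasure_blowup_gridPartition hG.choose.pos ⟨_, normAdj_mem_Mstar hG⟩⟩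

end AdjacencyMatrix

theorem stmt5_general (γ : ℕ → SGraphon) (μ : SGraphon) :
    (∀ k : ℕ, 0 < k →
      VietorisTendsto (fun n => kShape (γ n).toMeasure k) (kShape μ.toMeasure k)) ↔
    VietorisTendsto (fun n => shape (γ n)) (shape μ) := by
  simp only [← vietorisTendsto_kShapeStar_iff]
  exact ⟨vietorisTendsto_shape, fun h _ => vietorisTendsto_kShapeStar h⟩

/-- Corollary `cor:graphs`. A sequence of finite graphs `Gₙ` (each with a
non-empty edge set) is s-convergent to an s-graphon `μ` (i.e. for every `k`, the `k`-shapes of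
`μ_{Ã_{Gₙ}}` converge to `C(μ,k)` in the Vietoris topology) if and only if the shapes
`C(Gₙ) = C(μ_{Ã_{Gₙ}})` converge to `C(μ)` in the Vietoris topology on compact subsets of the
space of s-graphons. -/
theorem stmt5 (V : ℕ → ℕ) (G : ∀ n, SimpleGraph (Fin (V n)))
    (hE : ∀ n, ∃ i j, (G n).Adj i j) (μ : SGraphon) :
    (∀ k : ℕ, 0 < k →
      VietorisTendsto (fun n => kShape (muM (normAdj (G n))) k) (kShape μ.toMeasure k)) ↔
    VietorisTendsto (fun n => shapeM (muM (normAdj (G n)))) (shape μ) := by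
  choose γ hγ using fun n => exists_toMeasure_eq_muM_normAdj (hE n)
  simpa only [shape, hγ] using stmt5_general γ μ

end
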